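/- arXiv:1802.04033 — 2 statements merged into one kernel-verified Lean document; each statement's English description precedes it below -/
import Mathlib

section
/- Let V ⊆ ℂⁿ be open, let f be holomorphic on V, and let b_1, …, b_n be holomorphic on V × V such that for every ζ ∈ V there is r > 0 with f(z) − f(ζ) = Σ_{j=1}^n b_j(ζ,z)(z_j − ζ_j) for all z with ‖z − ζ‖ < r. Then for every ζ ∈ V and every multi-index α ∈ ℕⁿ with |α| ≥ 1, (1/α!) (∂^{|α|} f/∂ζ^α)(ζ) = Σ_{j : α_j ≥ 1} (α_j/α!) (∂_z^{α − e_j} b_j)(ζ,ζ), where ∂_z^β b_j denotes the partial derivative of b_j of multi-order β taken in the second (z) variable, e_j is the j-th standard multi-index, α! = α_1! ⋯ α_n! and |α| = α_1 + … + α_n. -/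
open Complex Set

noncomputable section

/-- Iterated complex directional derivative along a list of directions. -/
def dirDeriv {n : ℕ} (f : (Fin n → ℂ) → ℂ) : List (Fin n → ℂ) → (Fin n → ℂ) → ℂ
  | [], ζ => f ζ
  | v :: vs, ζ => fderiv ℂ (dirDeriv f vs) ζ v

/-- The complex partial derivative `∂^{|α|} f / ∂ζ^α` of multi-order `α`. -/
def mderiv {n : ℕ} (f : (Fin n → ℂ) → ℂ) (α : Fin n → ℕ) (ζ : Fin n → ℂ) : ℂ :=
  dirDeriv f ((List.finRange n).flatMap fun i => List.replicate (α i) (Pi.single i 1)) ζ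

/-!
Near `ζ` the function `f - f ζ` is the sum of the products `b_j(ζ, z) * (z_j - ζ_j)`. The factor
`z_j - ζ_j` vanishes at `ζ`, and its only nonzero partial derivative is the first one in `z_j`,
which is `1`. The Leibniz rule for `∂^α` of such a product, evaluated at `ζ`, therefore leaves only
the term `α_j * ∂^(α - e_j) b_j(ζ, ζ)`.

The Leibniz rule requires all iterated directional derivatives of a holomorphic function to be
holomorphic. Schwarz's lemma bounds the derivative and the remainder of the first-order Taylor
expansion of a bounded holomorphic function. The bound on the remainder is quadratic, so the
difference quotients in a fixed direction converge locally uniformly, and by the derivative bound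
locally uniform limits of holomorphic functions are holomorphic (Weierstrass).
-/

open Metric Filter Asymptotics Topology

section ComplexNormedSpaces

variable {E F : Type*} [NormedAddCommGroup E] [NormedSpace ℂ E] [NormedAddCommGroup F]
  [NormedSpace ℂ F] {f : E → F} {c : E} {r R C : ℝ}

theorem norm_fderiv_le_of_forall_mem_ball_norm_le (hR : 0 < R)
    (hf : DifferentiableOn ℂ f (ball c R)) (hC : ∀ z ∈ ball c R, ‖f z‖ ≤ C) :
    ‖fderiv ℂ f c‖ ≤ 2 * C / R := by
  refine norm_fderiv_le_div_of_mapsTo_ball hf (fun z hz ↦ ?_) hR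
  rw [mem_closedBall_iff_norm]
  linarith [norm_sub_le (f z) (f c), hC z hz, hC c (mem_ball_self hR)]

theorem norm_sub_sub_fderiv_le_of_forall_mem_ball_norm_le
    (hf : DifferentiableOn ℂ f (ball c R)) (hC : ∀ z ∈ ball c R, ‖f z‖ ≤ C) {y : E}
    (hy : ‖y‖ < R) :
    ‖f (c + y) - f c - fderiv ℂ f c y‖ ≤ 4 * C * (‖y‖ / R) ^ 2 := by
  have hR : 0 < R := (norm_nonneg y).trans_lt hy
  set g : E → F := fun z ↦ f z - fderiv ℂ f c (z - c)
  have hg : DifferentiableOn ℂ g (ball c R) := hf.sub (by fun_prop)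
  have hmaps : MapsTo g (ball c R) (closedBall (g c) (4 * C)) := by
    intro z hz
    have hlin : ‖fderiv ℂ f c (z - c)‖ ≤ 2 * C :=
      calc ‖fderiv ℂ f c (z - c)‖ ≤ 2 * C / R * ‖z - c‖ :=
            ContinuousLinearMap.le_of_opNorm_le _
              (norm_fderiv_le_of_forall_mem_ball_norm_le hR hf hC) _
        _ ≤ 2 * C / R * R := by
            have := (norm_nonneg _).trans (hC c (mem_ball_self hR))
            gcongr
            exact (mem_ball_iff_norm.1 hz).le
        _ = 2 * C := div_mul_cancel₀ _ hR.ne'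
    have hgc : g z - g c = f z - f c - fderiv ℂ f c (z - c) := by
      simp only [g, sub_self, map_zero, sub_zero]
      abel
    rw [mem_closedBall_iff_norm, hgc]
    linarith [norm_sub_le (f z - f c) (fderiv ℂ f c (z - c)), norm_sub_le (f z) (f c), hC z hz,
      hC c (mem_ball_self hR)]
  have hlittle : (g · - g c) =o[𝓝 c] fun z ↦ ‖z - c‖ ^ 1 := by
    have hfc := (hf.differentiableAt (ball_mem_nhds c hR)).hasFDerivAt.isLittleO
    simpa only [g, sub_self, map_zero, sub_zero, pow_one, sub_right_comm] using hfc.norm_right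
  have hball : c + y ∈ ball c R := by simpa using hy
  simpa [g, dist_eq_norm, sub_right_comm] using
    dist_le_mul_div_pow_of_mapsTo_ball_of_isLittleO hg hmaps hlittle hball

variable {ι : Type*} {l : Filter ι} {G : ι → E → F}

theorem uniformCauchySeqOn_fderiv (hrR : r < R) (hG : UniformCauchySeqOn G l (ball c R))
    (hd : ∀ᶠ i in l, DifferentiableOn ℂ (G i) (ball c R)) :
    UniformCauchySeqOn (fun i ↦ fderiv ℂ (G i)) l (ball c r) := by
  rw [SeminormedAddGroup.uniformCauchySeqOn_iff_tendstoUniformlyOn_zero,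
    Metric.tendstoUniformlyOn_iff] at hG ⊢
  simp only [Pi.zero_apply, dist_zero_left, neg_add_eq_sub] at hG ⊢
  intro ε hε
  have hδ : 0 < R - r := sub_pos.2 hrR
  filter_upwards [hG (ε * (R - r) / 4) (by positivity), hd.prod_mk hd] with ⟨i, k⟩ hik ⟨hi, hk⟩ z hz
  have hzR : ball z (R - r) ⊆ ball c R :=
    ball_subset_ball' (by linarith [mem_ball.1 hz])
  have hzc : ball c R ∈ 𝓝 z := mem_of_superset (ball_mem_nhds z hδ) hzR
  have hbound := norm_fderiv_le_of_forall_mem_ball_norm_le hδ ((hk.sub hi).mono hzR)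
    fun w hw ↦ (hik w (hzR hw)).le
  rw [fderiv_sub (hk.differentiableAt hzc) (hi.differentiableAt hzc)] at hbound
  calc ‖fderiv ℂ (G k) z - fderiv ℂ (G i) z‖ ≤ 2 * (ε * (R - r) / 4) / (R - r) := hbound
    _ = ε / 2 := by field_simp; norm_num
    _ < ε := half_lt_self hε

theorem differentiableAt_of_tendstoUniformlyOn [CompleteSpace F] [l.NeBot] {s : Set E}
    (hs : s ∈ 𝓝 c) (hG : TendstoUniformlyOn G f l s)
    (hd : ∀ᶠ i in l, DifferentiableOn ℂ (G i) s) : DifferentiableAt ℂ f c := by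
  obtain ⟨R, hR, hRs⟩ := Metric.mem_nhds_iff.1 hs
  have hnhds : ball c (R / 2) ∈ 𝓝 c := ball_mem_nhds c (half_pos hR)
  have hcauchy := uniformCauchySeqOn_fderiv (half_lt_self hR) (hG.mono hRs).uniformCauchySeqOn
    (hd.mono fun i hi ↦ hi.mono hRs)
  have hlim : ∀ z ∈ ball c (R / 2), ∃ L, Tendsto (fun i ↦ fderiv ℂ (G i) z) l (𝓝 L) :=
    fun z hz ↦ cauchy_map_iff_exists_tendsto.1 (hcauchy.cauchy_map hz)
  choose! f' hf' using hlim
  have hG' : TendstoUniformlyOnFilter (fun i ↦ fderiv ℂ (G i)) f' l (𝓝 c) :=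
    (hcauchy.tendstoUniformlyOn_of_tendsto hf').tendstoUniformlyOnFilter.mono_right
      (le_principal_iff.2 hnhds)
  have hderiv : ∀ᶠ p in l ×ˢ 𝓝 c, HasFDerivAt (G p.1) (fderiv ℂ (G p.1) p.2) p.2 := by
    filter_upwards [hd.prod_mk (eventually_mem_nhds_iff.2 hs)] with p hp
    exact (hp.1.differentiableAt hp.2).hasFDerivAt
  have hpoint : ∀ᶠ z in 𝓝 c, Tendsto (fun i ↦ G i z) l (𝓝 (f z)) := by
    filter_upwards [hs] with z hz using hG.tendsto_at hz
  exact (hasFDerivAt_of_tendstoUniformlyOnFilter hG' hderiv hpoint).differentiableAt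

theorem eventually_norm_smul_lt (hr : 0 < r) (v : E) : ∀ᶠ h : ℂ in 𝓝[≠] 0, ‖h • v‖ < r := by
  refine nhdsWithin_le_nhds (ContinuousAt.eventually_lt (by fun_prop) (by fun_prop) ?_)
  simpa using hr

theorem tendstoUniformlyOn_slope_fderiv_apply (hr : 0 < r)
    (hf : DifferentiableOn ℂ f (ball c (2 * r))) (hC : ∀ z ∈ ball c (2 * r), ‖f z‖ ≤ C) (v : E) :
    TendstoUniformlyOn (fun (h : ℂ) z ↦ h⁻¹ • (f (z + h • v) - f z)) (fun z ↦ fderiv ℂ f z v)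
      (𝓝[≠] 0) (ball c r) := by
  have herror : Tendsto (fun h : ℂ ↦ 4 * C * (‖v‖ / r) ^ 2 * ‖h‖) (𝓝[≠] 0) (𝓝 0) := by
    have : Continuous fun h : ℂ ↦ 4 * C * (‖v‖ / r) ^ 2 * ‖h‖ := by fun_prop
    simpa using (this.tendsto 0).mono_left nhdsWithin_le_nhds
  rw [Metric.tendstoUniformlyOn_iff]
  intro ε hε
  filter_upwards [eventually_norm_smul_lt hr v, herror.eventually_lt_const hε, self_mem_nhdsWithin]
    with h hhv hhε (hh : h ≠ 0) z hz
  have hzr : ball z r ⊆ ball c (2 * r) := ball_subset_ball' (by linarith [mem_ball.1 hz])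
  have htaylor := norm_sub_sub_fderiv_le_of_forall_mem_ball_norm_le (hf.mono hzr)
    (fun w hw ↦ hC w (hzr hw)) hhv
  have hquot : h⁻¹ • (f (z + h • v) - f z) - fderiv ℂ f z v =
      h⁻¹ • (f (z + h • v) - f z - fderiv ℂ f z (h • v)) := by
    rw [map_smul, smul_sub _ _ (h • _), inv_smul_smul₀ hh]
  rw [dist_comm, dist_eq_norm, hquot, norm_smul, norm_inv]
  calc ‖h‖⁻¹ * ‖f (z + h • v) - f z - fderiv ℂ f z (h • v)‖
      ≤ ‖h‖⁻¹ * (4 * C * (‖h • v‖ / r) ^ 2) := by gcongr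
    _ = 4 * C * (‖v‖ / r) ^ 2 * ‖h‖ := by
      have := norm_ne_zero_iff.2 hh
      rw [norm_smul]
      field_simp
    _ < ε := hhε

theorem differentiableOn_fderiv_apply [CompleteSpace F] {U : Set E} (hU : IsOpen U)
    (hf : DifferentiableOn ℂ f U) (v : E) : DifferentiableOn ℂ (fun z ↦ fderiv ℂ f z v) U := by
  intro x hx
  have hbdd : ∀ᶠ z in 𝓝 x, ‖f z‖ < ‖f x‖ + 1 :=
    (hf.continuousOn.continuousAt (hU.mem_nhds hx)).norm.eventually_lt_const (lt_add_one _)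
  obtain ⟨R, hR, hball⟩ := Metric.eventually_nhds_iff_ball.1 ((hU.eventually_mem hx).and hbdd)
  obtain ⟨r, rfl⟩ : ∃ r, R = 2 * r := ⟨R / 2, by ring⟩
  have hr : 0 < r := by linarith
  have hf' : DifferentiableOn ℂ f (ball x (2 * r)) := hf.mono fun z hz ↦ (hball z hz).1
  have hslope : ∀ᶠ h : ℂ in 𝓝[≠] 0,
      DifferentiableOn ℂ (fun z ↦ h⁻¹ • (f (z + h • v) - f z)) (ball x r) := by
    filter_upwards [eventually_norm_smul_lt hr v] with h hh
    have hshift : MapsTo (· + h • v) (ball x r) (ball x (2 * r)) := by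
      intro z hz
      rw [mem_ball_iff_norm] at hz ⊢
      rw [add_sub_right_comm]
      linarith [norm_add_le (z - x) (h • v)]
    exact ((hf'.comp (by fun_prop) hshift).sub
      (hf'.mono (ball_subset_ball (by linarith)))).const_smul h⁻¹
  exact (differentiableAt_of_tendstoUniformlyOn (ball_mem_nhds x hr)
    (tendstoUniformlyOn_slope_fderiv_apply hr hf' (fun z hz ↦ (hball z hz).2.le) v)
    hslope).differentiableWithinAt

end ComplexNormedSpaces

section DirDeriv

variable {n : ℕ} {U : Set (Fin n → ℂ)} {f g : (Fin n → ℂ) → ℂ}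

theorem differentiableOn_dirDeriv (hU : IsOpen U) (hg : DifferentiableOn ℂ g U) :
    ∀ L : List (Fin n → ℂ), DifferentiableOn ℂ (dirDeriv g L) U
  | [] => hg
  | v :: L => differentiableOn_fderiv_apply hU (differentiableOn_dirDeriv hU hg L) v

theorem dirDeriv_congr (hU : IsOpen U) (hfg : EqOn f g U) :
    ∀ L : List (Fin n → ℂ), EqOn (dirDeriv f L) (dirDeriv g L) U
  | [] => hfg
  | v :: L => fun z hz ↦ by
    have hL := (dirDeriv_congr hU hfg L).eventuallyEq_of_mem (hU.mem_nhds hz)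
    simp only [dirDeriv, hL.fderiv_eq]

theorem dirDeriv_sub_const (g : (Fin n → ℂ) → ℂ) (a : ℂ) :
    ∀ {L : List (Fin n → ℂ)}, L ≠ [] → dirDeriv (fun z ↦ g z - a) L = dirDeriv g L
  | [v], _ => funext fun _ ↦ DFunLike.congr_fun (fderiv_sub_const a) v
  | v :: w :: L, _ => by
    funext z
    rw [dirDeriv, dirDeriv_sub_const g a (List.cons_ne_nil w L), ← dirDeriv]

theorem dirDeriv_sum (hU : IsOpen U) {ι : Type*} (s : Finset ι) {g : ι → (Fin n → ℂ) → ℂ}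
    (hg : ∀ i ∈ s, DifferentiableOn ℂ (g i) U) :
    ∀ L : List (Fin n → ℂ),
      EqOn (dirDeriv (fun z ↦ ∑ i ∈ s, g i z) L) (fun z ↦ ∑ i ∈ s, dirDeriv (g i) L z) U
  | [] => eqOn_refl _ _
  | v :: L => fun z hz ↦ by
    have hL := (dirDeriv_sum hU s hg L).eventuallyEq_of_mem (hU.mem_nhds hz)
    have hdiff : ∀ i ∈ s, DifferentiableAt ℂ (dirDeriv (g i) L) z := fun i hi ↦
      (differentiableOn_dirDeriv hU (hg i hi) L).differentiableAt (hU.mem_nhds hz)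
    simp only [dirDeriv, hL.fderiv_eq, fderiv_fun_sum hdiff, sum_apply]

variable {φ : (Fin n → ℂ) →L[ℂ] ℂ} {a c : ℂ} {A B L M : List (Fin n → ℂ)} {v : Fin n → ℂ}

theorem dirDeriv_cons_mul_sub (hU : IsOpen U) (hg : DifferentiableOn ℂ g U)
    (hL : EqOn (dirDeriv (fun z ↦ g z * (φ z - a)) L)
      (fun z ↦ dirDeriv g L z * (φ z - a) + c * dirDeriv g M z) U) (v : Fin n → ℂ) :
    EqOn (dirDeriv (fun z ↦ g z * (φ z - a)) (v :: L))
      (fun z ↦ dirDeriv g (v :: L) z * (φ z - a) + φ v * dirDeriv g L z +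
        c * dirDeriv g (v :: M) z) U := by
  intro z hz
  have hderiv (N : List (Fin n → ℂ)) :
      HasFDerivAt (dirDeriv g N) (fderiv ℂ (dirDeriv g N) z) z :=
    ((differentiableOn_dirDeriv hU hg N).differentiableAt (hU.mem_nhds hz)).hasFDerivAt
  have hright := ((hderiv L).fun_mul (φ.hasFDerivAt.sub_const a)).fun_add ((hderiv M).const_mul c)
  rw [dirDeriv, (hL.eventuallyEq_of_mem (hU.mem_nhds hz)).fderiv_eq, hright.fderiv]
  simp only [dirDeriv, add_apply, smul_apply, smul_eq_mul]
  ring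

theorem dirDeriv_mul_sub_of_forall_eq_zero (hU : IsOpen U) (hg : DifferentiableOn ℂ g U)
    (hL : ∀ w ∈ L, φ w = 0) :
    EqOn (dirDeriv (fun z ↦ g z * (φ z - a)) L) (fun z ↦ dirDeriv g L z * (φ z - a)) U := by
  induction L with
  | nil => exact eqOn_refl _ _
  | cons w L ih =>
    obtain ⟨hw, hL⟩ := List.forall_mem_cons.1 hL
    simpa only [hw, zero_mul, add_zero] using
      dirDeriv_cons_mul_sub (φ := φ) (c := 0) (M := []) hU hg (by simpa using ih hL) w

theorem dirDeriv_replicate_append_mul_sub (hU : IsOpen U) (hg : DifferentiableOn ℂ g U)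
    (hv : φ v = 1) (hB : ∀ w ∈ B, φ w = 0) (m : ℕ) :
    EqOn (dirDeriv (fun z ↦ g z * (φ z - a)) (List.replicate m v ++ B))
      (fun z ↦ dirDeriv g (List.replicate m v ++ B) z * (φ z - a) +
        m * dirDeriv g (List.replicate (m - 1) v ++ B) z) U := by
  induction m with
  | zero => simpa using dirDeriv_mul_sub_of_forall_eq_zero hU hg hB
  | succ m ih =>
    refine (dirDeriv_cons_mul_sub hU hg ih v).trans fun z _ ↦ ?_
    rcases m with _ | m
    · simp [hv]
    · simp only [hv, List.replicate_succ, List.cons_append, Nat.add_sub_cancel]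
      push_cast
      ring

theorem dirDeriv_append_replicate_append_mul_sub (hU : IsOpen U) (hg : DifferentiableOn ℂ g U)
    (hA : ∀ w ∈ A, φ w = 0) (hv : φ v = 1) (hB : ∀ w ∈ B, φ w = 0) (m : ℕ) :
    EqOn (dirDeriv (fun z ↦ g z * (φ z - a)) (A ++ (List.replicate m v ++ B)))
      (fun z ↦ dirDeriv g (A ++ (List.replicate m v ++ B)) z * (φ z - a) +
        m * dirDeriv g (A ++ (List.replicate (m - 1) v ++ B)) z) U := by
  induction A with
  | nil => exact dirDeriv_replicate_append_mul_sub hU hg hv hB m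
  | cons w A ih =>
    obtain ⟨hw, hA⟩ := List.forall_mem_cons.1 hA
    simpa only [List.cons_append, hw, zero_mul, add_zero] using
      dirDeriv_cons_mul_sub hU hg (ih hA) w

end DirDeriv

section MultiIndex

variable {n : ℕ} {U : Set (Fin n → ℂ)} {g : (Fin n → ℂ) → ℂ} {x : Fin n → ℂ}

theorem apply_eq_zero_of_mem_flatMap_replicate {s : List (Fin n)} {j : Fin n} (hs : j ∉ s)
    (α : Fin n → ℕ) {v : Fin n → ℂ}
    (hv : v ∈ s.flatMap fun i ↦ List.replicate (α i) (Pi.single i 1)) : v j = 0 := by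
  obtain ⟨i, hi, hv⟩ := List.mem_flatMap.1 hv
  rw [List.eq_of_mem_replicate hv]
  exact Pi.single_eq_of_ne (ne_of_mem_of_not_mem hi hs).symm 1

theorem mderiv_mul_coord_sub (hU : IsOpen U) (hg : DifferentiableOn ℂ g U) (hx : x ∈ U)
    (j : Fin n) (α : Fin n → ℕ) :
    mderiv (fun z ↦ g z * (z j - x j)) α x =
      α j * mderiv g (fun i ↦ α i - if i = j then 1 else 0) x := by
  obtain ⟨s, t, hst⟩ := List.append_of_mem (List.mem_finRange j)
  have hnodup := List.nodup_finRange n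
  rw [hst, List.nodup_middle, List.nodup_cons, List.mem_append, not_or] at hnodup
  obtain ⟨⟨hs, ht⟩, -⟩ := hnodup
  have hlower {u : List (Fin n)} (hu : j ∉ u) :
      (u.flatMap fun i ↦ List.replicate (α i - if i = j then 1 else 0) (Pi.single i (1 : ℂ))) =
        u.flatMap fun i ↦ List.replicate (α i) (Pi.single i 1) :=
    List.flatMap_congr fun i hi ↦ by simp [ne_of_mem_of_not_mem hi hu]
  simp only [mderiv, hst, List.flatMap_append, List.flatMap_cons, hlower hs, hlower ht, if_pos]
  simpa using dirDeriv_append_replicate_append_mul_sub (φ := .proj j) (a := x j) hU hg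
    (fun _ ↦ apply_eq_zero_of_mem_flatMap_replicate hs α) (Pi.single_eq_same j 1)
    (fun _ ↦ apply_eq_zero_of_mem_flatMap_replicate ht α) (α j) hx

theorem flatMap_replicate_ne_nil {α : Fin n → ℕ} (hα : α ≠ 0) :
    (List.finRange n).flatMap (fun i ↦ List.replicate (α i) (Pi.single i (1 : ℂ))) ≠ [] := by
  contrapose! hα
  funext i
  simpa using List.flatMap_eq_nil_iff.1 hα i (List.mem_finRange i)

end MultiIndex

theorem statement5_general {n : ℕ} {V : Set (Fin n → ℂ)} {ζ : Fin n → ℂ} (hV : V ∈ 𝓝 ζ)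
    {f : (Fin n → ℂ) → ℂ} {b : Fin n → (Fin n → ℂ) → ℂ}
    (hb : ∀ j, DifferentiableOn ℂ (b j) V)
    (hf : ∀ᶠ z in 𝓝 ζ, f z - f ζ = ∑ j, b j z * (z j - ζ j))
    {α : Fin n → ℕ} (hα : 1 ≤ ∑ i, α i) :
    ((∏ i, Nat.factorial (α i) : ℕ) : ℂ)⁻¹ * mderiv f α ζ =
      ∑ j ∈ Finset.univ.filter (fun j ↦ 1 ≤ α j),
        ((α j : ℂ) / ((∏ i, Nat.factorial (α i) : ℕ) : ℂ)) *
          mderiv (b j) (fun i ↦ α i - if i = j then 1 else 0) ζ := by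
  obtain ⟨U, hUV, hU, hζ⟩ := _root_.mem_nhds_iff.1 (inter_mem hV hf)
  have hbU (j : Fin n) : DifferentiableOn ℂ (b j) U := (hb j).mono fun z hz ↦ (hUV hz).1
  have hα0 : α ≠ 0 := by
    rintro rfl
    simp at hα
  have hmderiv : mderiv f α ζ =
      ∑ j, α j * mderiv (b j) (fun i ↦ α i - if i = j then 1 else 0) ζ :=
    calc mderiv f α ζ = mderiv (fun z ↦ f z - f ζ) α ζ :=
          (congrFun (dirDeriv_sub_const f (f ζ) (flatMap_replicate_ne_nil hα0)) ζ).symm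
      _ = mderiv (fun z ↦ ∑ j, b j z * (z j - ζ j)) α ζ :=
          dirDeriv_congr hU (fun z hz ↦ (hUV hz).2) _ hζ
      _ = ∑ j, mderiv (fun z ↦ b j z * (z j - ζ j)) α ζ :=
          dirDeriv_sum hU _ (fun j _ ↦ (hbU j).mul (by fun_prop)) _ hζ
      _ = ∑ j, α j * mderiv (b j) (fun i ↦ α i - if i = j then 1 else 0) ζ :=
          Finset.sum_congr rfl fun j _ ↦ mderiv_mul_coord_sub hU (hbU j) hζ j α
  rw [hmderiv, Finset.mul_sum, Finset.sum_filter_of_ne]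
  · refine Finset.sum_congr rfl fun j _ ↦ ?_
    ring
  · intro j _ hj
    refine Nat.one_le_iff_ne_zero.2 fun hαj ↦ hj ?_
    simp [hαj]

theorem statement5 {n : ℕ}
    (V : Set (Fin n → ℂ)) (hV : IsOpen V)
    (f : (Fin n → ℂ) → ℂ) (hf : DifferentiableOn ℂ f V)
    (b : Fin n → ((Fin n → ℂ) × (Fin n → ℂ)) → ℂ)
    (hb : ∀ j, DifferentiableOn ℂ (b j) (V ×ˢ V))
    (hdecomp : ∀ ζ ∈ V, ∃ r : ℝ, 0 < r ∧ ∀ z : Fin n → ℂ, ‖z - ζ‖ < r →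
      f z - f ζ = ∑ j, b j (ζ, z) * (z j - ζ j)) :
    ∀ ζ ∈ V, ∀ α : Fin n → ℕ, 1 ≤ ∑ i, α i →
      ((∏ i, Nat.factorial (α i) : ℕ) : ℂ)⁻¹ * mderiv f α ζ =
        ∑ j ∈ Finset.univ.filter (fun j => 1 ≤ α j),
          ((α j : ℂ) / ((∏ i, Nat.factorial (α i) : ℕ) : ℂ)) *
            mderiv (fun z => b j (ζ, z)) (fun i => α i - if i = j then 1 else 0) ζ := by
  intro ζ hζ α hα
  exact statement5_general (b := fun j z ↦ b j (ζ, z)) (hV.mem_nhds hζ)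
    (fun j ↦ (hb j).comp (by fun_prop) fun _ hz ↦ ⟨hζ, hz⟩)
    (by simpa only [Metric.eventually_nhds_iff, dist_eq_norm] using hdecomp ζ hζ) hα
end
end

section
/- Let ρ be a real-valued C^∞ function on an open set U ⊆ ℂⁿ which is strictly plurisubharmonic on U, and let K ⊆ U be compact. Define the Levi polynomial F(ζ,z) = Σ_{j=1}^n (∂ρ/∂ζ_j)(ζ)(z_j − ζ_j) + (1/2) Σ_{j,k=1}^n (∂²ρ/∂ζ_j∂ζ_k)(ζ)(z_j − ζ_j)(z_k − ζ_k). Then there exist β > 0 and ε > 0 such that for all ζ ∈ K and all z ∈ U with ‖ζ − z‖ < ε, 2 Re F(ζ,z) ≤ ρ(z) − ρ(ζ) − 2β ‖ζ − z‖². -/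
open Complex Set

noncomputable section

/-- The Wirtinger `(1,0)`-derivative of a real-valued function `ρ` at `p`
in the direction `v`, i.e. `∑ⱼ ∂ρ/∂zⱼ(p) vⱼ`. -/
def wder {n : ℕ} (ρ : EuclideanSpace ℂ (Fin n) → ℝ) (p v : EuclideanSpace ℂ (Fin n)) : ℂ :=
  (1 / 2 : ℂ) * ((fderiv ℝ ρ p v : ℂ) - Complex.I * (fderiv ℝ ρ p (Complex.I • v) : ℂ))

/-- The Wirtinger `(1,0)`-derivative of a complex-valued function. -/
def wderC {n : ℕ} (g : EuclideanSpace ℂ (Fin n) → ℂ) (p v : EuclideanSpace ℂ (Fin n)) : ℂ :=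
  (1 / 2 : ℂ) * (fderiv ℝ g p v - Complex.I * fderiv ℝ g p (Complex.I • v))

/-- The Levi form of `ρ` at `p` in direction `v`:
`∑_{j,k} ∂²ρ/∂zⱼ∂z̄ₖ(p) vⱼ conj(vₖ) = (Hess ρ(v,v) + Hess ρ(iv,iv))/4`. -/
def leviForm {n : ℕ} (ρ : EuclideanSpace ℂ (Fin n) → ℝ) (p v : EuclideanSpace ℂ (Fin n)) : ℝ :=
  (1 / 4) * (iteratedFDeriv ℝ 2 ρ p ![v, v] +
    iteratedFDeriv ℝ 2 ρ p ![Complex.I • v, Complex.I • v])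

/-- The Levi polynomial
`F(ζ,z) = ∑ⱼ ∂ρ/∂ζⱼ(ζ)(zⱼ−ζⱼ) + (1/2) ∑_{j,k} ∂²ρ/∂ζⱼ∂ζₖ(ζ)(zⱼ−ζⱼ)(zₖ−ζₖ)`. -/
def leviPoly {n : ℕ} (ρ : EuclideanSpace ℂ (Fin n) → ℝ)
    (ζ z : EuclideanSpace ℂ (Fin n)) : ℂ :=
  (∑ j, wder ρ ζ (EuclideanSpace.single j (1 : ℂ)) * (z j - ζ j)) +
  (1 / 2 : ℂ) * ∑ j, ∑ k,
    wderC (fun w => wder ρ w (EuclideanSpace.single k (1 : ℂ))) ζ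
        (EuclideanSpace.single j (1 : ℂ)) *
      (z j - ζ j) * (z k - ζ k)

/-!
The real Hessian of `ρ` at `ζ`, as a quadratic form, is the sum of twice the real part of its
`(2,0)`-part, which is what the Levi polynomial retains, and twice the Levi form. Hence the
second-order Taylor polynomial of `ρ` at `ζ` is `ρ(ζ) + 2 Re F(ζ, z) + L_ζ(z - ζ)`. On the compact
set `K` the Levi form `L_ζ(w)` is at least `c ‖w‖²`, and the Taylor remainder is at most
`(c / 2) ‖z - ζ‖²` once `z` is uniformly close to `ζ ∈ K`, so `β = c / 4` works.
-/

lemma exists_forall_dist_lt_of_continuousAt {X Y : Type*} [PseudoMetricSpace X]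
    [PseudoMetricSpace Y] {f : X → Y} {K : Set X} (hK : IsCompact K)
    (hf : ∀ a ∈ K, ContinuousAt f a) {η : ℝ} (hη : 0 < η) :
    ∃ δ > 0, ∀ a ∈ K, ∀ x, dist x a < δ → dist (f x) (f a) < η := by
  obtain ⟨δ, hδ_pos, hδ⟩ := Metric.mem_uniformity_dist.1
    (hK.uniformContinuousAt_of_continuousAt f hf (Metric.dist_mem_uniformity hη))
  refine ⟨δ, hδ_pos, fun a ha x hx => ?_⟩
  rw [dist_comm] at hx ⊢
  exact hδ hx ha

section Taylor

variable {E F : Type*} [NormedAddCommGroup E] [NormedSpace ℝ E]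
  [NormedAddCommGroup F] [NormedSpace ℝ F]

lemma hasFDerivAt_half_smul_apply_sub_sub {B : E →L[ℝ] E →L[ℝ] F}
    (hB : ∀ v w, B v w = B w v) (a x : E) :
    HasFDerivAt (fun y => (1 / 2 : ℝ) • B (y - a) (y - a)) (B (x - a)) x := by
  have hsub : HasFDerivAt (fun y => y - a) (ContinuousLinearMap.id ℝ E) x :=
    (hasFDerivAt_id x).sub_const a
  refine (((B.hasFDerivAt.comp x hsub).clm_apply hsub).const_smul (1 / 2 : ℝ)).congr_fderiv ?_
  ext v
  simp only [ContinuousLinearMap.comp_id, Function.comp_apply, smul_apply, add_apply,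
    ContinuousLinearMap.flip_apply, hB v (x - a)]
  module

lemma norm_taylor_two_remainder_le {f : E → F} {s : Set E} {a x : E} {η : ℝ}
    (hs : Convex ℝ s) (hf : ∀ y ∈ s, ContDiffAt ℝ 2 f y)
    (hη : ∀ y ∈ s, ‖fderiv ℝ (fderiv ℝ f) y - fderiv ℝ (fderiv ℝ f) a‖ ≤ η)
    (ha : a ∈ s) (hx : x ∈ s) :
    ‖f x - f a - fderiv ℝ f a (x - a) -
      (1 / 2 : ℝ) • fderiv ℝ (fderiv ℝ f) a (x - a) (x - a)‖ ≤ η * ‖x - a‖ ^ 2 := by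
  set H := fderiv ℝ (fderiv ℝ f) a
  have hη_nonneg : 0 ≤ η := le_trans (by positivity) (hη a ha)
  have hH_symm : IsSymmSndFDerivAt ℝ f a := (hf a ha).isSymmSndFDerivAt (by simp)
  have hf'_diff (y) (hy : y ∈ s) : DifferentiableAt ℝ (fderiv ℝ f) y :=
    ((hf y hy).fderiv_right (m := 1) (by norm_num)).differentiableAt (by norm_num)
  have hf'_taylor (y) (hy : y ∈ s) : ‖fderiv ℝ f y - fderiv ℝ f a - H (y - a)‖ ≤ η * ‖y - a‖ :=
    hs.norm_image_sub_le_of_norm_fderiv_le' hf'_diff hη ha hy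
  have hseg : segment ℝ a x ⊆ s := hs.segment_subset ha hx
  let g (y : E) : F := f y - (1 / 2 : ℝ) • H (y - a) (y - a)
  have hg_deriv (y) (hy : y ∈ s) : HasFDerivAt g (fderiv ℝ f y - H (y - a)) y :=
    ((hf y hy).differentiableAt (by norm_num)).hasFDerivAt.sub
      (hasFDerivAt_half_smul_apply_sub_sub hH_symm a y)
  have hg_deriv_bound (y) (hy : y ∈ segment ℝ a x) :
      ‖fderiv ℝ f y - H (y - a) - fderiv ℝ f a‖ ≤ η * ‖x - a‖ := by
    rw [sub_right_comm]
    exact (hf'_taylor y (hseg hy)).trans (by gcongr; exact norm_sub_le_of_mem_segment hy)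
  have hg_mean_value : ‖g x - g a - fderiv ℝ f a (x - a)‖ ≤ η * ‖x - a‖ * ‖x - a‖ :=
    (convex_segment a x).norm_image_sub_le_of_norm_hasFDerivWithin_le'
      (fun y hy => (hg_deriv y (hseg hy)).hasFDerivWithinAt)
      hg_deriv_bound (left_mem_segment ℝ a x) (right_mem_segment ℝ a x)
  calc _ = ‖g x - g a - fderiv ℝ f a (x - a)‖ := by
        congr 1
        simp only [g, sub_self, map_zero, smul_zero, sub_zero]
        abel
    _ ≤ η * ‖x - a‖ * ‖x - a‖ := hg_mean_value
    _ = η * ‖x - a‖ ^ 2 := by ring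

lemma exists_forall_norm_taylor_two_remainder_le {f : E → F} {K : Set E} (hK : IsCompact K)
    (hf : ∀ a ∈ K, ContDiffAt ℝ 2 f a) {η : ℝ} (hη : 0 < η) :
    ∃ ε > 0, ∀ a ∈ K, ∀ x, ‖x - a‖ < ε →
      ‖f x - f a - fderiv ℝ f a (x - a) -
        (1 / 2 : ℝ) • fderiv ℝ (fderiv ℝ f) a (x - a) (x - a)‖ ≤ η * ‖x - a‖ ^ 2 := by
  have hopen : IsOpen {x | ContDiffAt ℝ 2 f x} :=
    isOpen_iff_mem_nhds.2 fun x (hx : ContDiffAt ℝ 2 f x) => hx.eventually (by decide)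
  obtain ⟨δ, hδ_pos, hδ⟩ := hK.exists_thickening_subset_open hopen hf
  have hcont (a) (ha : a ∈ K) : ContinuousAt (fderiv ℝ (fderiv ℝ f)) a :=
    (((hf a ha).fderiv_right (m := 1) (by norm_num)).fderiv_right (m := 0)
      (by norm_num)).continuousAt
  obtain ⟨δ', hδ'_pos, hδ'⟩ := exists_forall_dist_lt_of_continuousAt
    (Y := E →L[ℝ] E →L[ℝ] F) hK hcont hη
  refine ⟨min δ δ', lt_min hδ_pos hδ'_pos, fun a ha x hx => ?_⟩
  refine norm_taylor_two_remainder_le (convex_ball a (min δ δ')) (fun y hy => ?_) (fun y hy => ?_)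
    (Metric.mem_ball_self (lt_min hδ_pos hδ'_pos)) (mem_ball_iff_norm.2 hx)
  · exact hδ (Metric.mem_thickening_iff.2 ⟨a, ha, (Metric.mem_ball.1 hy).trans_le (min_le_left ..)⟩)
  · have hosc := hδ' a ha y ((Metric.mem_ball.1 hy).trans_le (min_le_right ..))
    exact (dist_eq_norm_sub (E := E →L[ℝ] E →L[ℝ] F) ..).ge.trans hosc.le

end Taylor

lemma exists_pos_forall_mul_norm_sq_le {X E : Type*} [TopologicalSpace X] [NormedAddCommGroup E]
    [NormedSpace ℝ E] [ProperSpace E] {K : Set X} (hK : IsCompact K) {Q : X → E → ℝ}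
    (hQ_cont : ContinuousOn Q.uncurry (K ×ˢ univ))
    (hQ_smul : ∀ x ∈ K, ∀ (t : ℝ) v, Q x (t • v) = t ^ 2 * Q x v)
    (hQ_pos : ∀ x ∈ K, ∀ v, v ≠ 0 → 0 < Q x v) :
    ∃ c > 0, ∀ x ∈ K, ∀ v, c * ‖v‖ ^ 2 ≤ Q x v := by
  obtain ⟨c, hc_pos, hc⟩ := (hK.prod (isCompact_sphere (0 : E) 1)).exists_forall_le' (a := 0)
    (hQ_cont.mono (prod_mono_right (subset_univ _)))
    (fun q hq => hQ_pos q.1 hq.1 q.2 (ne_zero_of_mem_unit_sphere ⟨q.2, hq.2⟩))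
  refine ⟨c, hc_pos, fun x hx v => ?_⟩
  obtain rfl | hv := eq_or_ne v 0
  · simpa using (hQ_smul x hx 0 0).ge
  have hv_norm : ‖v‖ ≠ 0 := norm_ne_zero_iff.2 hv
  have hunit : c ≤ Q x (‖v‖⁻¹ • v) :=
    hc (x, ‖v‖⁻¹ • v) ⟨hx, by simp [norm_smul, hv_norm]⟩
  calc c * ‖v‖ ^ 2 ≤ Q x (‖v‖⁻¹ • v) * ‖v‖ ^ 2 := by gcongr
    _ = Q x (‖v‖ • ‖v‖⁻¹ • v) := by rw [hQ_smul x hx ‖v‖, mul_comm]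
    _ = Q x v := by rw [smul_inv_smul₀ hv_norm]

section ComplexLinearPart

variable {E F : Type*} [AddCommGroup E] [Module ℂ E] [AddCommGroup F] [Module ℂ F]

/-- The `ℂ`-linear part `v ↦ (D v - i D (i v)) / 2` of an `ℝ`-linear map `D` between complex vector
spaces; the Wirtinger `(1,0)`-derivative is the `ℂ`-linear part of the real derivative. -/
def complexLinearPart (D : E →ₗ[ℝ] F) : E →ₗ[ℂ] F where
  toFun v := (1 / 2 : ℂ) • (D v - I • D (I • v))
  map_add' v w := by
    simp only [smul_add, map_add]
    module
  map_smul' c v := by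
    have map_complex_smul (u : E) : D (c • u) = c.re • D u + c.im • D (I • u) := by
      rw [← map_smul, ← map_smul, ← map_add, ← coe_smul, ← coe_smul, smul_smul, ← add_smul,
        re_add_im]
    have hI : D (I • c • v) = c.re • D (I • v) - c.im • D v := by
      rw [smul_comm, map_complex_smul, smul_smul I I, I_mul_I, neg_one_smul, map_neg, smul_neg,
        sub_eq_add_neg]
    rw [map_complex_smul, hI]
    simp only [← coe_smul, RingHom.id_apply]
    match_scalars
    · linear_combination (1 / 2) * re_add_im c
    · linear_combination -(I / 2) * re_add_im c + (c.im / 2) * I_mul_I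

end ComplexLinearPart

lemma sum_map_single_mul {ι 𝕜 : Type*} [Fintype ι] [DecidableEq ι] [RCLike 𝕜]
    (L : EuclideanSpace 𝕜 ι →ₗ[𝕜] 𝕜) (w : EuclideanSpace 𝕜 ι) :
    ∑ j, L (EuclideanSpace.single j 1) * w j = L w := by
  conv_rhs => rw [← (EuclideanSpace.basisFun ι 𝕜).sum_repr w, map_sum]
  simp [mul_comm]

section Wirtinger

variable {n : ℕ} {ρ : EuclideanSpace ℂ (Fin n) → ℝ} {p : EuclideanSpace ℂ (Fin n)}

lemma sum_wder_single_mul (ρ : EuclideanSpace ℂ (Fin n) → ℝ) (p w : EuclideanSpace ℂ (Fin n)) :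
    ∑ j, wder ρ p (EuclideanSpace.single j 1) * w j = wder ρ p w :=
  sum_map_single_mul (complexLinearPart (ofRealCLM.comp (fderiv ℝ ρ p)).toLinearMap) w

lemma sum_wderC_single_mul (g : EuclideanSpace ℂ (Fin n) → ℂ) (p w : EuclideanSpace ℂ (Fin n)) :
    ∑ j, wderC g p (EuclideanSpace.single j 1) * w j = wderC g p w :=
  sum_map_single_mul (complexLinearPart (fderiv ℝ g p).toLinearMap) w

lemma wderC_sum_mul_const {ι : Type*} (s : Finset ι) {g : ι → EuclideanSpace ℂ (Fin n) → ℂ}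
    (hg : ∀ k ∈ s, DifferentiableAt ℝ (g k) p) (c : ι → ℂ) (v : EuclideanSpace ℂ (Fin n)) :
    wderC (fun x => ∑ k ∈ s, g k x * c k) p v = ∑ k ∈ s, wderC (g k) p v * c k := by
  have hfderiv : fderiv ℝ (fun x => ∑ k ∈ s, g k x * c k) p = ∑ k ∈ s, c k • fderiv ℝ (g k) p := by
    rw [fderiv_fun_sum fun k hk => (hg k hk).mul_const (c k)]
    exact Finset.sum_congr rfl fun k hk => fderiv_mul_const (hg k hk) (c k)
  simp only [wderC, hfderiv, sum_apply, smul_apply, smul_eq_mul,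
    Finset.mul_sum, ← Finset.sum_sub_distrib]
  exact Finset.sum_congr rfl fun k _ => by ring

lemma hasFDerivAt_wder (hρ : DifferentiableAt ℝ (fderiv ℝ ρ) p) (u : EuclideanSpace ℂ (Fin n)) :
    HasFDerivAt (fun x => wder ρ x u)
      ((1 / 2 : ℂ) • (ofRealCLM.comp ((fderiv ℝ (fderiv ℝ ρ) p).flip u) -
        I • ofRealCLM.comp ((fderiv ℝ (fderiv ℝ ρ) p).flip (I • u)))) p := by
  have happly (v : EuclideanSpace ℂ (Fin n)) : HasFDerivAt (fun x => (fderiv ℝ ρ x v : ℂ))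
      (ofRealCLM.comp ((fderiv ℝ (fderiv ℝ ρ) p).flip v)) p :=
    (ofRealCLM.comp (ContinuousLinearMap.apply ℝ ℝ v)).hasFDerivAt.comp p hρ.hasFDerivAt
  exact ((happly u).sub ((happly (I • u)).const_mul I)).const_mul (1 / 2 : ℂ)

lemma two_mul_re_wder (ρ : EuclideanSpace ℂ (Fin n) → ℝ) (p v : EuclideanSpace ℂ (Fin n)) :
    2 * (wder ρ p v).re = fderiv ℝ ρ p v := by
  simp [wder]

lemma leviForm_eq_fderiv_fderiv (ρ : EuclideanSpace ℂ (Fin n) → ℝ)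
    (p v : EuclideanSpace ℂ (Fin n)) :
    leviForm ρ p v = (1 / 4) * (fderiv ℝ (fderiv ℝ ρ) p v v +
      fderiv ℝ (fderiv ℝ ρ) p (I • v) (I • v)) := by
  simp [leviForm, iteratedFDeriv_two_apply]

lemma wderC_wder (hρ : DifferentiableAt ℝ (fderiv ℝ ρ) p) (u v : EuclideanSpace ℂ (Fin n)) :
    wderC (fun x => wder ρ x u) p v =
      ((1 / 4 * (fderiv ℝ (fderiv ℝ ρ) p v u -
        fderiv ℝ (fderiv ℝ ρ) p (I • v) (I • u)) : ℝ) : ℂ) -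
      ((1 / 4 * (fderiv ℝ (fderiv ℝ ρ) p v (I • u) +
        fderiv ℝ (fderiv ℝ ρ) p (I • v) u) : ℝ) : ℂ) * I := by
  simp only [wderC, (hasFDerivAt_wder hρ u).fderiv, smul_apply, sub_apply,
    ContinuousLinearMap.comp_apply, ContinuousLinearMap.flip_apply, ofRealCLM_apply, smul_eq_mul]
  push_cast
  linear_combination (1 / 4 * (fderiv ℝ (fderiv ℝ ρ) p (I • v) (I • u) : ℂ)) * I_sq

lemma re_wderC_wder_self (hρ : DifferentiableAt ℝ (fderiv ℝ ρ) p)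
    (v : EuclideanSpace ℂ (Fin n)) :
    (wderC (fun x => wder ρ x v) p v).re =
      (1 / 2) * fderiv ℝ (fderiv ℝ ρ) p v v - leviForm ρ p v := by
  rw [wderC_wder hρ, sub_re, ofReal_re, re_ofReal_mul, I_re, leviForm_eq_fderiv_fderiv]
  ring

lemma leviPoly_eq_wder_add_wderC_wder (hρ : DifferentiableAt ℝ (fderiv ℝ ρ) p)
    (z : EuclideanSpace ℂ (Fin n)) :
    leviPoly ρ p z =
      wder ρ p (z - p) + (1 / 2) * wderC (fun x => wder ρ x (z - p)) p (z - p) := by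
  have hdiff (u : EuclideanSpace ℂ (Fin n)) : DifferentiableAt ℝ (fun x => wder ρ x u) p :=
    (hasFDerivAt_wder hρ u).differentiableAt
  simp only [leviPoly, ← PiLp.sub_apply]
  rw [sum_wder_single_mul, Finset.sum_comm]
  simp only [← Finset.sum_mul, sum_wderC_single_mul]
  rw [← wderC_sum_mul_const _ fun k _ => hdiff _]
  simp only [sum_wder_single_mul]

lemma two_mul_re_leviPoly (hρ : DifferentiableAt ℝ (fderiv ℝ ρ) p)
    (z : EuclideanSpace ℂ (Fin n)) :
    2 * (leviPoly ρ p z).re = fderiv ℝ ρ p (z - p) +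
      (1 / 2) * fderiv ℝ (fderiv ℝ ρ) p (z - p) (z - p) - leviForm ρ p (z - p) := by
  have hre : (leviPoly ρ p z).re = (wder ρ p (z - p)).re +
      (1 / 2) * (wderC (fun x => wder ρ x (z - p)) p (z - p)).re := by
    simp [leviPoly_eq_wder_add_wderC_wder hρ]
  rw [hre, re_wderC_wder_self hρ, ← two_mul_re_wder]
  ring

lemma leviForm_smul (ρ : EuclideanSpace ℂ (Fin n) → ℝ) (p : EuclideanSpace ℂ (Fin n)) (t : ℝ)
    (v : EuclideanSpace ℂ (Fin n)) : leviForm ρ p (t • v) = t ^ 2 * leviForm ρ p v := by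
  simp only [leviForm_eq_fderiv_fderiv, smul_comm I t v, map_smul, smul_apply, smul_eq_mul]
  ring

lemma continuousOn_uncurry_leviForm {s : Set (EuclideanSpace ℂ (Fin n))}
    (hρ : ContinuousOn (fderiv ℝ (fderiv ℝ ρ)) s) :
    ContinuousOn (leviForm ρ).uncurry (s ×ˢ univ) := by
  have hH : ContinuousOn (fun q : EuclideanSpace ℂ (Fin n) × EuclideanSpace ℂ (Fin n) =>
      fderiv ℝ (fderiv ℝ ρ) q.1) (s ×ˢ univ) := hρ.comp continuousOn_fst fun q hq => hq.1
  simp only [Function.uncurry_def, leviForm_eq_fderiv_fderiv]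
  fun_prop

end Wirtinger

theorem statement15_general {n : ℕ} (ρ : EuclideanSpace ℂ (Fin n) → ℝ)
    (K : Set (EuclideanSpace ℂ (Fin n))) (hK : IsCompact K)
    (hρ : ∀ p ∈ K, ContDiffAt ℝ 2 ρ p)
    (hpsh : ∀ p ∈ K, ∀ v, v ≠ 0 → 0 < leviForm ρ p v) :
    ∃ β : ℝ, 0 < β ∧ ∃ ε : ℝ, 0 < ε ∧
      ∀ ζ ∈ K, ∀ z, ‖ζ - z‖ < ε →
        2 * (leviPoly ρ ζ z).re ≤ ρ z - ρ ζ - 2 * β * ‖ζ - z‖ ^ 2 := by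
  have hfderiv (p) (hp : p ∈ K) : ContDiffAt ℝ 1 (fderiv ℝ ρ) p :=
    (hρ p hp).fderiv_right (by norm_num)
  have hcont : ContinuousOn (fderiv ℝ (fderiv ℝ ρ)) K := fun p hp =>
    ((hfderiv p hp).fderiv_right (m := 0) (by norm_num)).continuousAt.continuousWithinAt
  obtain ⟨c, hc, hlevi⟩ := exists_pos_forall_mul_norm_sq_le hK
    (continuousOn_uncurry_leviForm hcont) (fun p _ => leviForm_smul ρ p) hpsh
  obtain ⟨ε, hε, htaylor⟩ := exists_forall_norm_taylor_two_remainder_le hK hρ (half_pos hc)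
  refine ⟨c / 4, by positivity, ε, hε, fun ζ hζ z hz => ?_⟩
  rw [norm_sub_rev] at hz ⊢
  have hremainder := neg_le_of_abs_le (htaylor ζ hζ z hz)
  have hlevi_lower := hlevi ζ hζ (z - ζ)
  rw [smul_eq_mul] at hremainder
  rw [two_mul_re_leviPoly ((hfderiv ζ hζ).differentiableAt (by norm_num))]
  linarith

theorem statement15 {n : ℕ}
    (U : Set (EuclideanSpace ℂ (Fin n))) (hU : IsOpen U)
    (ρ : EuclideanSpace ℂ (Fin n) → ℝ) (hρ : ContDiffOn ℝ (⊤ : ℕ∞) ρ U)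
    (hpsh : ∀ p ∈ U, ∀ v, v ≠ 0 → 0 < leviForm ρ p v)
    (K : Set (EuclideanSpace ℂ (Fin n))) (hK : IsCompact K) (hKU : K ⊆ U) :
    ∃ β : ℝ, 0 < β ∧ ∃ ε : ℝ, 0 < ε ∧
      ∀ ζ ∈ K, ∀ z ∈ U, ‖ζ - z‖ < ε →
        2 * (leviPoly ρ ζ z).re ≤ ρ z - ρ ζ - 2 * β * ‖ζ - z‖ ^ 2 := by
  obtain ⟨β, hβ, ε, hε, h⟩ := statement15_general ρ K hK
    (fun p hp => (hρ.contDiffAt (hU.mem_nhds (hKU hp))).of_le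
      (WithTop.coe_le_coe.2 (le_top (a := 2))))
    (fun p hp => hpsh p (hKU hp))
  exact ⟨β, hβ, ε, hε, fun ζ hζ z _ => h ζ hζ z⟩
end
end
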